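/- arXiv:1006.4402 — 2 statements merged into one kernel-verified Lean document; each statement's English description precedes it below -/
import Mathlib

section
/- Let H_A and H_B be finite-dimensional complex Hilbert spaces, let {P^i_A}_{i∈I} be a CSOOP on H_A and {P^j_B}_{j∈J} a CSOOP on H_B, and let ρ = Σ_{i,j} p_{ij} P^i_A ⊗ P^j_B be a density operator with nonnegative coefficients p_{ij}. Then a CSOOP {Q^l_B}_{l∈L} on H_B satisfies ρ = Σ_l (I_A ⊗ Q^l_B) ρ (I_A ⊗ Q^l_B) if and only if for every pair (j, l) with P^j_B Q^l_B ≠ 0 one has p_{ij} = tr(ρ (P^i_A ⊗ Q^l_B)) for all i ∈ I; that is, the admissible CSOOPs on H_B are unique up to the degeneracy common to all the conditional states tr_A(ρ (P^i_A ⊗ I_B)). -/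
/-!
Put `σ i = ∑ j, p i j • PB j`, so that `ρ = ∑ i, PA i ⊗ σ i`. Since the `PA i` are mutually
orthogonal nonzero idempotents, `ρ` is fixed by the pinching `X ↦ ∑ l, (1 ⊗ Q l) X (1 ⊗ Q l)` if
and only if each conditional state `σ i` is fixed by `X ↦ ∑ l, Q l X Q l`; moreover
`tr (ρ (PA i ⊗ Q l)) = tr (σ i Q l)`. So everything reduces to one operator `σ = ∑ j, c j • PB j`
on the second factor (`pinching_iff`).

The key fact there is `Q X Q = tr (X Q) • Q` for a projector `Q` of trace 1
(`sandwich_eq_trace_smul`). If `σ` is fixed by the pinching, then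
`σ Q l = Q l σ Q l = tr (σ Q l) • Q l`. Multiplying on the left by `PB j`, which satisfies
`PB j σ = c j • PB j`, gives `c j • PB j Q l = tr (σ Q l) • PB j Q l`, whence the equality of the
coefficients when `PB j Q l ≠ 0`. Conversely the coefficient condition yields
`c j • PB j Q l = tr (σ Q l) • PB j Q l` for all `j` and `l`; summing over `j` gives
`σ Q l = tr (σ Q l) • Q l = Q l σ Q l`, and summing over `l` gives the invariance of `σ`.
-/

open scoped Kronecker ComplexOrder

noncomputable section

/-- A complete set of orthogonal one-dimensional projectors (CSOOP): a family of
Hermitian rank-one projectors that are mutually orthogonal and sum to the identity. -/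
def IsCSOOP {ι H : Type*} [Fintype ι] [Fintype H] [DecidableEq H]
    (P : ι → Matrix H H ℂ) : Prop :=
  (∀ i, (P i).IsHermitian) ∧ (∀ i, P i * P i = P i) ∧ (∀ i, (P i).trace = 1) ∧
    (∀ i j, i ≠ j → P i * P j = 0) ∧ ∑ i, P i = 1

/-- A density operator: positive semidefinite with trace 1. -/
def IsDensity {H : Type*} [Fintype H] [DecidableEq H] (ρ : Matrix H H ℂ) : Prop :=
  ρ.PosSemidef ∧ ρ.trace = 1

/-- Partial trace over the second tensor factor. -/
def ptraceB {A B : Type*} [Fintype B]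
    (X : Matrix (A × B) (A × B) ℂ) : Matrix A A ℂ :=
  Matrix.of fun a a' => ∑ b, X (a, b) (a', b)

/-- Partial trace over the first tensor factor. -/
def ptraceA {A B : Type*} [Fintype A]
    (X : Matrix (A × B) (A × B) ℂ) : Matrix B B ℂ :=
  Matrix.of fun b b' => ∑ a, X (a, b) (a, b')

/-- A trace-one idempotent has rank one, hence is an outer product of a column and a row. -/
lemma exists_eq_vecMulVec {H : Type*} [Fintype H] [DecidableEq H] {Q : Matrix H H ℂ}
    (hQ : Q * Q = Q) (ht : Q.trace = 1) : ∃ v c : H → ℂ, Q = Matrix.vecMulVec v c := by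
  have hid : IsIdempotentElem (Matrix.toLin' Q) := by
    rw [IsIdempotentElem, Module.End.mul_eq_comp, ← Matrix.toLin'_mul, hQ]
  have htr := (LinearMap.IsIdempotentElem.isProj_range _ hid).trace
  rw [Matrix.trace_toLin'_eq, ht] at htr
  have hfr : Module.finrank ℂ (LinearMap.range (Matrix.toLin' Q)) = 1 := by
    exact_mod_cast htr.symm
  obtain ⟨v, -, hv⟩ := finrank_eq_one_iff'.mp hfr
  choose c hc using fun b : H => hv ⟨Matrix.toLin' Q (Pi.single b 1), LinearMap.mem_range_self _ _⟩
  refine ⟨v, c, ?_⟩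
  ext a b
  have := congrFun (congrArg Subtype.val (hc b)) a
  simp only [Submodule.coe_smul, Pi.smul_apply, smul_eq_mul, Matrix.toLin'_apply,
    Matrix.mulVec_single_one, Matrix.col_apply] at this
  rw [Matrix.vecMulVec_apply, ← this, mul_comm]

lemma sandwich_eq_trace_smul {H : Type*} [Fintype H] [DecidableEq H] {Q : Matrix H H ℂ}
    (hQ : Q * Q = Q) (ht : Q.trace = 1) (X : Matrix H H ℂ) :
    Q * X * Q = (X * Q).trace • Q := by
  obtain ⟨v, c, rfl⟩ := exists_eq_vecMulVec hQ ht
  rw [Matrix.mul_assoc, Matrix.mul_vecMulVec, Matrix.vecMulVec_mul_vecMulVec,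
    Matrix.trace_vecMulVec, dotProduct_comm, Matrix.vecMulVec_smul]

/-- An operator fixed by the pinching along `Q` is block diagonal: by orthogonality, multiplying
the pinching sum by `Q l` leaves only its `l`-th term. -/
lemma mul_eq_of_pinching {H L : Type*} [Fintype H] [Fintype L] [DecidableEq H]
    {Q : L → Matrix H H ℂ} (hQ : IsCSOOP Q) {σ : Matrix H H ℂ}
    (h : σ = ∑ l, Q l * σ * Q l) (l : L) : σ * Q l = Q l * σ * Q l := by
  obtain ⟨-, hid, -, horth, -⟩ := hQ
  conv_lhs => rw [h]
  rw [Finset.sum_mul, Finset.sum_eq_single l]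
  · rw [Matrix.mul_assoc, hid]
  · intro m _ hm
    rw [Matrix.mul_assoc, horth m l hm, Matrix.mul_zero]
  · simp

/-- The statement for a single system: an operator diagonal in the CSOOP `P` is fixed by the
pinching along `Q` iff its eigenvalues agree with the diagonal coefficients along `Q` wherever
`P j` and `Q l` overlap. -/
lemma pinching_iff {H κ L : Type*} [Fintype H] [DecidableEq H] [Fintype κ] [Fintype L]
    {P : κ → Matrix H H ℂ} {Q : L → Matrix H H ℂ} (hP : IsCSOOP P) (hQ : IsCSOOP Q)
    (c : κ → ℂ) {σ : Matrix H H ℂ} (hσ : σ = ∑ j, c j • P j) :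
    σ = ∑ l, Q l * σ * Q l ↔ ∀ j l, P j * Q l ≠ 0 → c j = (σ * Q l).trace := by
  obtain ⟨-, hPid, -, hPorth, hPsum⟩ := hP
  have hPσ : ∀ j, P j * σ = c j • P j := by
    intro j
    rw [hσ, Finset.mul_sum, Finset.sum_eq_single j]
    · rw [Matrix.mul_smul, hPid]
    · intro k _ hk
      rw [Matrix.mul_smul, hPorth j k hk.symm, smul_zero]
    · simp
  have hsand : ∀ l, Q l * σ * Q l = (σ * Q l).trace • Q l :=
    fun l => sandwich_eq_trace_smul (hQ.2.1 l) (hQ.2.2.1 l) σ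
  constructor
  · intro h j l hne
    have h1 : σ * Q l = (σ * Q l).trace • Q l := (mul_eq_of_pinching hQ h l).trans (hsand l)
    have h2 : c j • (P j * Q l) = (σ * Q l).trace • (P j * Q l) := by
      rw [← Matrix.smul_mul, ← hPσ, Matrix.mul_assoc, ← Matrix.mul_smul, ← h1]
    exact smul_left_injective ℂ hne h2
  · intro h
    have h1 : ∀ l, σ * Q l = Q l * σ * Q l := by
      intro l
      rw [hsand]
      have h2 : ∀ j, c j • (P j * Q l) = (σ * Q l).trace • (P j * Q l) := by
        intro j
        by_cases hz : P j * Q l = 0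
        · simp [hz]
        · rw [h j l hz]
      calc σ * Q l = ∑ j, c j • (P j * Q l) := by
            conv_lhs => rw [hσ]
            simp only [Finset.sum_mul, Matrix.smul_mul]
        _ = (σ * Q l).trace • ((∑ j, P j) * Q l) := by
            rw [Finset.sum_congr rfl fun j _ => h2 j, Finset.sum_mul, Finset.smul_sum]
        _ = (σ * Q l).trace • Q l := by rw [hPsum, Matrix.one_mul]
    rw [← Finset.sum_congr rfl fun l _ => h1 l, ← Finset.mul_sum, hQ.2.2.2.2, Matrix.mul_one]

lemma kronecker_sum {A B ι : Type*} [Fintype ι] (X : Matrix A A ℂ) (Y : ι → Matrix B B ℂ) :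
    X ⊗ₖ (∑ i, Y i) = ∑ i, X ⊗ₖ Y i := by
  ext a b
  simp [Matrix.kroneckerMap_apply, Matrix.sum_apply, Finset.mul_sum]

/-- Kronecker multiplication by a nonzero left factor is injective. -/
lemma kronecker_left_cancel {A B : Type*} {X : Matrix A A ℂ} (hX : X ≠ 0)
    {Y Z : Matrix B B ℂ} (h : X ⊗ₖ Y = X ⊗ₖ Z) : Y = Z := by
  obtain ⟨a, a', hne⟩ : ∃ a a', X a a' ≠ 0 := by
    by_contra! hall
    exact hX (Matrix.ext hall)
  ext b b'
  have := congrFun (congrFun h (a, b)) (a', b')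
  simpa [Matrix.kroneckerMap_apply, hne] using this

/-- The blocks `Y i` of `∑ i, P i ⊗ Y i` are extracted by multiplying with `P i ⊗ 1`. -/
lemma proj_mul_sum_kronecker {A B ι : Type*} [Fintype A] [DecidableEq A] [Fintype B]
    [DecidableEq B] [Fintype ι] {P : ι → Matrix A A ℂ} (hP : IsCSOOP P)
    (Y : ι → Matrix B B ℂ) (i : ι) :
    (P i ⊗ₖ (1 : Matrix B B ℂ)) * ∑ k, P k ⊗ₖ Y k = P i ⊗ₖ Y i := by
  obtain ⟨-, hid, -, horth, -⟩ := hP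
  rw [Finset.mul_sum, Finset.sum_eq_single i]
  · rw [← Matrix.mul_kronecker_mul, hid, Matrix.one_mul]
  · intro k _ hk
    rw [← Matrix.mul_kronecker_mul, horth i k hk.symm, Matrix.zero_kronecker]
  · simp

lemma IsCSOOP.ne_zero {ι H : Type*} [Fintype ι] [Fintype H] [DecidableEq H]
    {P : ι → Matrix H H ℂ} (hP : IsCSOOP P) (i : ι) : P i ≠ 0 := by
  intro h
  have := hP.2.2.1 i
  simp [h] at this

lemma sum_kronecker_inj {A B ι : Type*} [Fintype A] [DecidableEq A] [Fintype B]
    [DecidableEq B] [Fintype ι] {P : ι → Matrix A A ℂ} (hP : IsCSOOP P)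
    (Y Z : ι → Matrix B B ℂ) :
    ∑ i, P i ⊗ₖ Y i = ∑ i, P i ⊗ₖ Z i ↔ ∀ i, Y i = Z i := by
  constructor
  · intro h i
    apply kronecker_left_cancel (hP.ne_zero i)
    rw [← proj_mul_sum_kronecker hP Y i, h, proj_mul_sum_kronecker hP Z i]
  · intro h
    simp only [h]


theorem stmt_2 {A B ι κ L : Type*} [Fintype A] [DecidableEq A] [Fintype B] [DecidableEq B]
    [Fintype ι] [Fintype κ] [Fintype L]
    (PA : ι → Matrix A A ℂ) (PB : κ → Matrix B B ℂ) (Q : L → Matrix B B ℂ)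
    (hPA : IsCSOOP PA) (hPB : IsCSOOP PB) (hQ : IsCSOOP Q)
    (p : ι → κ → ℝ) (hp : ∀ i j, 0 ≤ p i j)
    (ρ : Matrix (A × B) (A × B) ℂ) (hρ : IsDensity ρ)
    (hρdef : ρ = ∑ i, ∑ j, (p i j : ℂ) • (PA i ⊗ₖ PB j)) :
    (ρ = ∑ l, ((1 : Matrix A A ℂ) ⊗ₖ Q l) * ρ * ((1 : Matrix A A ℂ) ⊗ₖ Q l)) ↔
      ∀ j l, PB j * Q l ≠ 0 → ∀ i, (p i j : ℂ) = (ρ * (PA i ⊗ₖ Q l)).trace := by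
  have hρσ : ρ = ∑ i, PA i ⊗ₖ (∑ j, (p i j : ℂ) • PB j) := by
    rw [hρdef]
    simp only [kronecker_sum, Matrix.kronecker_smul]
  have hpinch : ∑ l, ((1 : Matrix A A ℂ) ⊗ₖ Q l) * ρ * ((1 : Matrix A A ℂ) ⊗ₖ Q l) =
      ∑ i, PA i ⊗ₖ (∑ l, Q l * (∑ j, (p i j : ℂ) • PB j) * Q l) := by
    rw [hρσ]
    simp only [kronecker_sum (PA _) fun l => Q l * _ * Q l]
    rw [Finset.sum_comm]
    refine Finset.sum_congr rfl fun l _ => ?_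
    rw [Finset.mul_sum, Finset.sum_mul]
    refine Finset.sum_congr rfl fun i _ => ?_
    rw [← Matrix.mul_kronecker_mul, ← Matrix.mul_kronecker_mul, Matrix.one_mul, Matrix.mul_one]
  have htr : ∀ i l, (ρ * (PA i ⊗ₖ Q l)).trace = ((∑ j, (p i j : ℂ) • PB j) * Q l).trace := by
    intro i l
    -- Cyclicity of the trace moves `PA i ⊗ 1` to the left of `ρ`, where it extracts one block.
    have hfac : PA i ⊗ₖ Q l = ((1 : Matrix A A ℂ) ⊗ₖ Q l) * (PA i ⊗ₖ (1 : Matrix B B ℂ)) := by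
      rw [← Matrix.mul_kronecker_mul, Matrix.one_mul, Matrix.mul_one]
    rw [hfac, ← Matrix.mul_assoc, Matrix.trace_mul_comm, ← Matrix.mul_assoc, hρσ,
      proj_mul_sum_kronecker hPA, ← Matrix.mul_kronecker_mul, Matrix.mul_one,
      Matrix.trace_kronecker, hPA.2.2.1 i, one_mul]
  rw [hpinch]
  conv_lhs => lhs; rw [hρσ]
  rw [sum_kronecker_inj hPA]
  simp only [htr]
  constructor
  · intro h j l hne i
    exact (pinching_iff hPB hQ (fun j => (p i j : ℂ)) rfl).mp (h i) j l hne
  · intro h i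
    exact (pinching_iff hPB hQ (fun j => (p i j : ℂ)) rfl).mpr fun j l hne => h j l hne i
end
end

section
/- Let H = H_1 ⊗ ⋯ ⊗ H_n be a tensor product of finite-dimensional complex Hilbert spaces, let 𝒢 ⊆ {1,…,n}, and let G be a unitary on H of the form G = G_𝒢 ⊗ I, acting nontrivially only on the factors indexed by 𝒢. Let ρ = Σ_{i⃗} p_{i⃗} ⊗_k P^{i_k}_k be a concordant density operator, where each {P^i_k}_i is a CSOOP on H_k, and suppose σ = G ρ G† is also concordant. Then there exist CSOOPs {Q^j_k}_j on H_k for each k ∈ 𝒢 and a bijection π of the index vectors satisfying (π(i⃗))_k = i_k for all k ∉ 𝒢, such that σ = Σ_{i⃗} p_{i⃗} (⊗_{k∉𝒢} P^{(π(i⃗))_k}_k) ⊗ (⊗_{k∈𝒢} Q^{(π(i⃗))_k}_k); that is, σ has a product eigenbasis agreeing with that of ρ outside 𝒢, with eigenvalues obtained from those of ρ by a permutation of index vectors supported on 𝒢. -/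
/-!
The unitary `G` commutes with `I ⊗ P^i_k ⊗ I` for every `k ∉ 𝒢`, and so does `ρ`; hence `σ = G ρ Gᴴ`
does too. On the factors `k ∈ 𝒢`, `σ` commutes with the one-site projectors of any product
basis `R` diagonalizing it. Taking `Q k = P k` outside `𝒢` and `Q k = R k` inside, `σ` commutes with
every one-site projector of `Q`, hence with the rank-one projectors `F j = ⨂ₖ Q k (j k)`, and is
therefore diagonal in this product basis: `σ = ∑ j, s j • F j`.

To match the eigenvalues, let `E' i = G (⨂ₖ P k (i k)) Gᴴ` and `D i j = tr (E' i * F j)`. All rows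
and columns of `D` sum to `1`. Since `E' i` and `F j` are eigenprojectors of `σ` for `p i` and
`s j`, `D i j = 0` unless `p i = s j`; since both are eigenprojectors of the commuting one-site
projectors outside `𝒢`, `D i j = 0` unless `i` and `j` agree outside `𝒢`. Such a `D` forces the
labels `(p i, i|_{𝒢ᶜ})` and `(s j, j|_{𝒢ᶜ})` to occur equally often, which yields the permutation.
-/

open Matrix
open scoped Kronecker ComplexOrder Classical

noncomputable section

/-- The tensor (Kronecker) product of one operator per tensor factor, as an
operator on the full tensor product space `⨂ₖ H k` (indexed by `∀ k, H k`). -/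
def prodOp {n : ℕ} {H : Fin n → Type*} [∀ k, Fintype (H k)]
    (M : ∀ k, Matrix (H k) (H k) ℂ) : Matrix (∀ k, H k) (∀ k, H k) ℂ :=
  Matrix.of fun x y => ∏ k, M k (x k) (y k)

/-- The operator `I ⊗ ⋯ ⊗ M ⊗ ⋯ ⊗ I` acting as `M` on the `k`-th factor. -/
def siteOp {n : ℕ} {H : Fin n → Type*} [∀ k, Fintype (H k)] [∀ k, DecidableEq (H k)]
    (k : Fin n) (M : Matrix (H k) (H k) ℂ) : Matrix (∀ k, H k) (∀ k, H k) ℂ :=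
  prodOp (Function.update (fun l => (1 : Matrix (H l) (H l) ℂ)) k M)

/-- `G` acts as `G_𝒢 ⊗ I`: it is of the form of an operator on the factors in `S`
tensored with the identity on the remaining factors. -/
def SupportedOn {n : ℕ} {H : Fin n → Type*} [∀ k, Fintype (H k)]
    (S : Finset (Fin n)) (G : Matrix (∀ k, H k) (∀ k, H k) ℂ) : Prop :=
  ∃ g : (∀ k : {k // k ∈ S}, H k.val) → (∀ k : {k // k ∈ S}, H k.val) → ℂ,
    ∀ x y, G x y =
      if ∀ k ∉ S, x k = y k then g (fun k => x k.val) (fun k => y k.val) else 0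

/-- A state is concordant if it is diagonal in some product basis, i.e. it is a
nonnegative combination of products of CSOOP projectors. -/
def IsConcordant {n : ℕ} {H : Fin n → Type*} [∀ k, Fintype (H k)] [∀ k, DecidableEq (H k)]
    (σ : Matrix (∀ k, H k) (∀ k, H k) ℂ) : Prop :=
  ∃ (R : ∀ k, H k → Matrix (H k) (H k) ℂ) (q : (∀ k, H k) → ℝ),
    (∀ k, IsCSOOP (R k)) ∧ (∀ iv, 0 ≤ q iv) ∧
      σ = ∑ iv : ∀ k, H k, (q iv : ℂ) • prodOp fun k => R k (iv k)

/-! ### Matching labels -/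

/-- A matrix with unit row and column sums which vanishes wherever the labels `t i`, `u j` differ
forces each label to occur equally often in `t` and in `u`. -/
lemma exists_perm_of_labels {I α : Type*} [Fintype I] (t u : I → α) (D : I → I → ℂ)
    (hD : ∀ i j, t i ≠ u j → D i j = 0) (hr : ∀ i, ∑ j, D i j = 1) (hc : ∀ j, ∑ i, D i j = 1) :
    ∃ π : Equiv.Perm I, ∀ i, u (π i) = t i := by
  have key : ∀ a, Nonempty ({i // t i = a} ≃ {j // u j = a}) := by
    intro a
    refine Fintype.card_eq.mp ?_
    have h1 : ((Fintype.card {i // t i = a} : ℕ) : ℂ)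
        = ∑ i, ∑ j, if t i = a ∧ u j = a then D i j else 0 := by
      rw [Fintype.card_subtype, Finset.card_filter]
      push_cast
      refine Finset.sum_congr rfl fun i _ => ?_
      by_cases h : t i = a
      · rw [if_pos h, ← hr i]
        refine Finset.sum_congr rfl fun j _ => ?_
        by_cases h' : u j = a
        · simp [h, h']
        · rw [if_neg (by tauto)]
          exact hD i j (by rw [h]; exact Ne.symm h')
      · simp [h]
    have h2 : ((Fintype.card {j // u j = a} : ℕ) : ℂ)
        = ∑ j, ∑ i, if t i = a ∧ u j = a then D i j else 0 := by
      rw [Fintype.card_subtype, Finset.card_filter]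
      push_cast
      refine Finset.sum_congr rfl fun j _ => ?_
      by_cases h : u j = a
      · rw [if_pos h, ← hc j]
        refine Finset.sum_congr rfl fun i _ => ?_
        by_cases h' : t i = a
        · simp [h, h']
        · rw [if_neg (by tauto)]
          exact hD i j (by rw [h]; exact h')
      · simp [h]
    rw [Finset.sum_comm, ← h1] at h2
    exact_mod_cast h2.symm
  let e : ∀ a, {i // t i = a} ≃ {j // u j = a} := fun a => (key a).some
  refine ⟨(Equiv.sigmaFiberEquiv t).symm.trans
    ((Equiv.sigmaCongrRight e).trans (Equiv.sigmaFiberEquiv u)), fun i => ?_⟩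
  exact (e (t i) ⟨i, rfl⟩).2

/-! ### Complete sets of rank-one projectors -/

/-- An idempotent of trace one has rank one, so compressing by it produces a multiple of it. -/
lemma compress_of_trace_one {H : Type*} [Fintype H] [DecidableEq H] {E : Matrix H H ℂ}
    (hE : E * E = E) (ht : E.trace = 1) (X : Matrix H H ℂ) :
    E * X * E = (E * X).trace • E := by
  have hid : IsIdempotentElem (Matrix.toLin' E) := by
    rw [IsIdempotentElem, Module.End.mul_eq_comp, ← Matrix.toLin'_mul, hE]
  have h1 := (LinearMap.IsIdempotentElem.isProj_range _ hid).trace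
  rw [Matrix.trace_toLin'_eq, ht] at h1
  have h2 : Module.finrank ℂ (LinearMap.range (Matrix.toLin' E)) = 1 := by exact_mod_cast h1.symm
  obtain ⟨v, -, hv⟩ := finrank_eq_one_iff'.mp h2
  choose c hc using fun j : H => hv ⟨Matrix.toLin' E (Pi.single j 1), LinearMap.mem_range_self _ _⟩
  have hvc : E = Matrix.vecMulVec v.1 c := by
    ext i j
    have := congrFun (congrArg Subtype.val (hc j)) i
    simp [Matrix.toLin'_apply] at this
    rw [Matrix.vecMulVec_apply, ← this, mul_comm]
  rw [hvc, Matrix.vecMulVec_mul, Matrix.trace_vecMulVec, Matrix.vecMulVec_mul_vecMulVec,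
    dotProduct_comm]
  simp [Matrix.vecMulVec_smul]

/-- An operator commuting with all members of a CSOOP is diagonal in it. -/
lemma IsCSOOP.eq_sum_of_commute {ι H : Type*} [Fintype ι] [Fintype H] [DecidableEq H]
    {F : ι → Matrix H H ℂ} (hF : IsCSOOP F) {X : Matrix H H ℂ} (hX : ∀ i, Commute X (F i)) :
    X = ∑ i, (F i * X).trace • F i := by
  obtain ⟨-, h2, h3, -, h5⟩ := hF
  calc X = X * ∑ i, F i := by rw [h5, mul_one]
    _ = ∑ i, X * F i := Finset.mul_sum _ _ _
    _ = _ := Finset.sum_congr rfl fun i _ => by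
      rw [← compress_of_trace_one (h2 i) (h3 i), ← (hX i).eq, mul_assoc, h2]

lemma IsCSOOP.sum_mul {ι H : Type*} [Fintype ι] [Fintype H] [DecidableEq H]
    {F : ι → Matrix H H ℂ} (hF : IsCSOOP F) (s : ι → ℂ) (j : ι) :
    (∑ i, s i • F i) * F j = s j • F j := by
  rw [Finset.sum_mul, Finset.sum_eq_single j]
  · rw [smul_mul_assoc, hF.2.1]
  · intro i _ hij
    rw [smul_mul_assoc, hF.2.2.2.1 i j hij, smul_zero]
  · simp

lemma IsCSOOP.mul_sum {ι H : Type*} [Fintype ι] [Fintype H] [DecidableEq H]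
    {F : ι → Matrix H H ℂ} (hF : IsCSOOP F) (s : ι → ℂ) (j : ι) :
    F j * (∑ i, s i • F i) = s j • F j := by
  rw [Finset.mul_sum, Finset.sum_eq_single j]
  · rw [mul_smul_comm, hF.2.1]
  · intro i _ hij
    rw [mul_smul_comm, hF.2.2.2.1 j i hij.symm, smul_zero]
  · simp

lemma IsCSOOP.commute {ι H : Type*} [Fintype ι] [Fintype H] [DecidableEq H]
    {F : ι → Matrix H H ℂ} (hF : IsCSOOP F) (i j : ι) : Commute (F i) (F j) := by
  by_cases h : i = j
  · subst h; exact Commute.refl _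
  · rw [Commute, SemiconjBy, hF.2.2.2.1 i j h, hF.2.2.2.1 j i (Ne.symm h)]

lemma IsCSOOP.card_eq {ι H : Type*} [Fintype ι] [Fintype H] [DecidableEq H]
    {F : ι → Matrix H H ℂ} (hF : IsCSOOP F) : Fintype.card ι = Fintype.card H := by
  have h := congrArg Matrix.trace hF.2.2.2.2
  rw [Matrix.trace_sum, Matrix.trace_one] at h
  simp only [hF.2.2.1] at h
  simpa using h

lemma IsCSOOP.reindex {ι κ H : Type*} [Fintype ι] [Fintype κ] [Fintype H] [DecidableEq H]
    {F : ι → Matrix H H ℂ} (hF : IsCSOOP F) (e : κ ≃ ι) : IsCSOOP fun i => F (e i) :=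
  ⟨fun i => hF.1 _, fun i => hF.2.1 _, fun i => hF.2.2.1 _,
    fun i j hij => hF.2.2.2.1 _ _ (e.injective.ne hij), by
      rw [← hF.2.2.2.2]; exact Equiv.sum_comp e F⟩

/-! ### Product and one-site operators -/

section Prod

variable {n : ℕ} {H : Fin n → Type*} [∀ k, Fintype (H k)]

lemma prodOp_mul (M N : ∀ k, Matrix (H k) (H k) ℂ) :
    prodOp M * prodOp N = prodOp fun k => M k * N k := by
  ext x y
  simp only [prodOp, Matrix.mul_apply, Matrix.of_apply, Finset.prod_univ_sum,
    Fintype.piFinset_univ, Finset.prod_mul_distrib]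

lemma prodOp_conjTranspose (M : ∀ k, Matrix (H k) (H k) ℂ) :
    (prodOp M)ᴴ = prodOp fun k => (M k)ᴴ := by
  ext x y
  simp [prodOp, Matrix.conjTranspose_apply]

lemma trace_prodOp (M : ∀ k, Matrix (H k) (H k) ℂ) :
    (prodOp M).trace = ∏ k, (M k).trace := by
  simp only [prodOp, Matrix.trace, Matrix.diag, Matrix.of_apply, Finset.prod_univ_sum,
    Fintype.piFinset_univ]

lemma sum_prodOp {ι : Fin n → Type*} [∀ k, Fintype (ι k)]
    (P : ∀ k, ι k → Matrix (H k) (H k) ℂ) :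
    ∑ iv : ∀ k, ι k, prodOp (fun k => P k (iv k)) = prodOp fun k => ∑ i, P k i := by
  ext x y
  simp only [prodOp, Matrix.sum_apply, Matrix.of_apply, Finset.prod_univ_sum,
    Fintype.piFinset_univ]

lemma prodOp_eq_zero (M : ∀ k, Matrix (H k) (H k) ℂ) (k : Fin n) (hk : M k = 0) :
    prodOp M = 0 := by
  ext x y
  simp only [prodOp, Matrix.of_apply, Matrix.zero_apply]
  exact Finset.prod_eq_zero (Finset.mem_univ k) (by rw [hk]; rfl)

variable [∀ k, DecidableEq (H k)]

lemma prodOp_one : prodOp (fun k => (1 : Matrix (H k) (H k) ℂ)) = 1 := by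
  ext x y
  simp only [prodOp, Matrix.of_apply, Matrix.one_apply]
  by_cases h : x = y
  · subst h; simp
  · rw [if_neg h]
    obtain ⟨k, hk⟩ := Function.ne_iff.mp h
    exact Finset.prod_eq_zero (Finset.mem_univ k) (if_neg hk)

lemma IsCSOOP.prodOp {ι : Fin n → Type*} [∀ k, Fintype (ι k)]
    {P : ∀ k, ι k → Matrix (H k) (H k) ℂ} (hP : ∀ k, IsCSOOP (P k)) :
    IsCSOOP fun iv : ∀ k, ι k => _root_.prodOp fun k => P k (iv k) := by
  refine ⟨fun iv => ?_, fun iv => ?_, fun iv => ?_, fun iv jv hij => ?_, ?_⟩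
  · rw [Matrix.IsHermitian, prodOp_conjTranspose]
    congr 1; funext k; exact (hP k).1 _
  · rw [prodOp_mul]
    congr 1; funext k; exact (hP k).2.1 _
  · rw [trace_prodOp]
    exact Finset.prod_eq_one fun k _ => (hP k).2.2.1 _
  · obtain ⟨k, hk⟩ := Function.ne_iff.mp hij
    rw [prodOp_mul]
    exact prodOp_eq_zero _ k ((hP k).2.2.2.1 _ _ hk)
  · rw [sum_prodOp, ← prodOp_one]
    congr 1; funext k; exact (hP k).2.2.2.2

lemma siteOp_mul_prodOp (k : Fin n) (A : Matrix (H k) (H k) ℂ)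
    (M : ∀ k, Matrix (H k) (H k) ℂ) :
    siteOp k A * prodOp M = prodOp (Function.update M k (A * M k)) := by
  rw [siteOp, prodOp_mul]
  congr 1; funext l
  by_cases h : l = k
  · subst h; simp
  · simp [h]

lemma prodOp_mul_siteOp (k : Fin n) (A : Matrix (H k) (H k) ℂ)
    (M : ∀ k, Matrix (H k) (H k) ℂ) :
    prodOp M * siteOp k A = prodOp (Function.update M k (M k * A)) := by
  rw [siteOp, prodOp_mul]
  congr 1; funext l
  by_cases h : l = k
  · subst h; simp
  · simp [h]

lemma siteOp_mul_siteOp (k : Fin n) (A B : Matrix (H k) (H k) ℂ) (h : A * B = 0) :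
    siteOp k A * siteOp k B = 0 := by
  rw [siteOp.eq_1 k B, siteOp_mul_prodOp]
  exact prodOp_eq_zero _ k (by simp [h])

lemma siteOp_conjTranspose (k : Fin n) (A : Matrix (H k) (H k) ℂ) (hA : A.IsHermitian) :
    (siteOp k A)ᴴ = siteOp k A := by
  rw [siteOp, prodOp_conjTranspose]
  congr 1; funext l
  by_cases h : l = k
  · subst h; simpa using hA.eq
  · simp [h]

lemma siteOp_commute_prodOp (k : Fin n) (A : Matrix (H k) (H k) ℂ)
    (M : ∀ k, Matrix (H k) (H k) ℂ) (h : Commute A (M k)) :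
    Commute (siteOp k A) (prodOp M) := by
  rw [Commute, SemiconjBy, siteOp_mul_prodOp, prodOp_mul_siteOp, h.eq]

/-- Commuting with the one-site operators of a product operator suffices, as it is their product. -/
lemma commute_prodOp (X : Matrix (∀ k, H k) (∀ k, H k) ℂ) (M : ∀ k, Matrix (H k) (H k) ℂ)
    (h : ∀ k, Commute X (siteOp k (M k))) : Commute X (prodOp M) := by
  have key : ∀ s : Finset (Fin n),
      Commute X (prodOp fun k => if k ∈ s then M k else 1) := by
    intro s
    induction s using Finset.induction_on with
    | empty => simp [prodOp_one]
    | insert a s ha ih =>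
      have : (prodOp fun k => if k ∈ insert a s then M k else 1)
          = siteOp a (M a) * prodOp fun k => if k ∈ s then M k else 1 := by
        rw [siteOp_mul_prodOp]
        congr 1; funext l
        by_cases hl : l = a
        · subst hl; simp [ha]
        · simp [hl]
      rw [this]
      exact (h a).mul_right ih
  simpa using key Finset.univ

/-- An operator diagonal in a product basis commutes with the one-site projectors of the basis. -/
lemma commute_siteOp_of_diagonal {ι : Fin n → Type*} [∀ k, Fintype (ι k)]
    {P : ∀ k, ι k → Matrix (H k) (H k) ℂ} (hP : ∀ k, IsCSOOP (P k)) (s : (∀ k, ι k) → ℂ)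
    (k : Fin n) (i : ι k) :
    Commute (∑ iv : ∀ k, ι k, s iv • prodOp fun k => P k (iv k)) (siteOp k (P k i)) :=
  Commute.sum_left _ _ _ fun iv _ => Commute.smul_left
    (siteOp_commute_prodOp k _ _ ((hP k).commute i (iv k))).symm _

lemma siteOp_apply (k : Fin n) (A : Matrix (H k) (H k) ℂ) (x y : ∀ k, H k) :
    siteOp k A x y = if ∀ l, l ≠ k → x l = y l then A (x k) (y k) else 0 := by
  rw [siteOp, prodOp, Matrix.of_apply]
  split_ifs with h
  · rw [Finset.prod_eq_single k]
    · simp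
    · intro l _ hl
      simp [hl, h l hl]
    · simp
  · push Not at h
    obtain ⟨l, hl, hxy⟩ := h
    exact Finset.prod_eq_zero (Finset.mem_univ l) (by simp [hl, hxy])

/-- `G_S ⊗ I` commutes with operators on a single factor outside `S`. -/
lemma SupportedOn.commute_siteOp {S : Finset (Fin n)} {G : Matrix (∀ k, H k) (∀ k, H k) ℂ}
    (hG : SupportedOn S G) (k : Fin n) (hk : k ∉ S) (A : Matrix (H k) (H k) ℂ) :
    Commute G (siteOp k A) := by
  obtain ⟨g, hg⟩ := hG
  ext x y
  simp only [Matrix.mul_apply, siteOp_apply]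
  -- in each sum only one intermediate index can contribute
  rw [Finset.sum_eq_single (Function.update y k (x k)),
    Finset.sum_eq_single (Function.update x k (y k))]
  · have hne : ∀ l : {l // l ∈ S}, l.1 ≠ k := fun l h => hk (h ▸ l.2)
    have e1 : (∀ l ∉ S, x l = Function.update y k (x k) l) ↔
        (∀ l ∉ S, Function.update x k (y k) l = y l) := by
      refine forall_congr' fun l => forall_congr' fun _ => ?_
      by_cases h : l = k
      · subst h; simp
      · simp [h]
    rw [if_pos (fun l hl => by simp [hl]), if_pos (fun l hl => by simp [hl]), hg, hg]
    simp only [e1, Function.update_self, Function.update_of_ne (hne _)]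
    rw [mul_comm]
  · intro z _ hz
    split_ifs with h
    · rw [hg, if_neg, mul_zero]
      intro h'
      apply hz
      funext l
      by_cases hl : l = k
      · subst hl; simpa using h' l hk
      · simpa [hl] using (h l hl).symm
    · rw [zero_mul]
  · simp
  · intro z _ hz
    split_ifs with h
    · rw [hg, if_neg, zero_mul]
      intro h'
      apply hz
      funext l
      by_cases hl : l = k
      · subst hl; simpa using (h' l hk).symm
      · simpa [hl] using h l hl
    · rw [mul_zero]
  · simp

end Prod

/-! ### Concordance-preserving local unitaries -/

theorem stmt_5 {n : ℕ} {H : Fin n → Type*} [∀ k, Fintype (H k)] [∀ k, DecidableEq (H k)]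
    {ι : Fin n → Type*} [∀ k, Fintype (ι k)]
    (𝒢 : Finset (Fin n))
    (G : Matrix (∀ k, H k) (∀ k, H k) ℂ)
    (hGunit : G ∈ Matrix.unitaryGroup (∀ k, H k) ℂ)
    (hGsupp : SupportedOn 𝒢 G)
    (P : ∀ k, ι k → Matrix (H k) (H k) ℂ) (hP : ∀ k, IsCSOOP (P k))
    (p : (∀ k, ι k) → ℝ) (hppos : ∀ iv, 0 ≤ p iv)
    (ρ : Matrix (∀ k, H k) (∀ k, H k) ℂ) (hρ : IsDensity ρ)
    (hρdef : ρ = ∑ iv : ∀ k, ι k, (p iv : ℂ) • prodOp fun k => P k (iv k))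
    (σ : Matrix (∀ k, H k) (∀ k, H k) ℂ) (hσdef : σ = G * ρ * Gᴴ)
    (hσconc : IsConcordant σ) :
    ∃ (Q : ∀ k, ι k → Matrix (H k) (H k) ℂ) (π : Equiv.Perm (∀ k, ι k)),
      (∀ k, IsCSOOP (Q k)) ∧ (∀ k ∉ 𝒢, Q k = P k) ∧
      (∀ iv, ∀ k ∉ 𝒢, π iv k = iv k) ∧
      σ = ∑ iv : ∀ k, ι k, (p iv : ℂ) • prodOp fun k => Q k (π iv k) := by
  obtain ⟨R, q, hR, -, hσR⟩ := hσconc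
  have hcard : ∀ k, Nonempty (ι k ≃ H k) := fun k => Fintype.card_eq.mp (hP k).card_eq
  let e : ∀ k, ι k ≃ H k := fun k => (hcard k).some
  let Q : ∀ k, ι k → Matrix (H k) (H k) ℂ :=
    fun k => if k ∈ 𝒢 then fun i => R k (e k i) else P k
  have hQin : ∀ k ∈ 𝒢, Q k = fun i => R k (e k i) := fun k hk => if_pos hk
  have hQout : ∀ k ∉ 𝒢, Q k = P k := fun k hk => if_neg hk
  have hQ : ∀ k, IsCSOOP (Q k) := by
    intro k
    by_cases hk : k ∈ 𝒢
    · rw [hQin k hk]; exact (hR k).reindex (e k)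
    · rw [hQout k hk]; exact hP k
  have hGS : ∀ k ∉ 𝒢, ∀ i, Commute G (siteOp k (P k i)) :=
    fun k hk i => hGsupp.commute_siteOp k hk _
  have hGS' : ∀ k ∉ 𝒢, ∀ i, Commute Gᴴ (siteOp k (P k i)) := by
    intro k hk i
    have h := congrArg Matrix.conjTranspose (hGS k hk i).eq
    rw [Matrix.conjTranspose_mul, Matrix.conjTranspose_mul,
      siteOp_conjTranspose k _ ((hP k).1 i)] at h
    exact h.symm
  have hcomm : ∀ k i, Commute σ (siteOp k (Q k i)) := by
    intro k i
    by_cases hk : k ∈ 𝒢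
    · rw [hQin k hk, hσR]
      exact commute_siteOp_of_diagonal hR _ k _
    · rw [hQout k hk, hσdef]
      refine ((hGS k hk i).mul_left ?_).mul_left (hGS' k hk i)
      rw [hρdef]
      exact commute_siteOp_of_diagonal hP _ k i
  have hE := IsCSOOP.prodOp hP
  have hF := IsCSOOP.prodOp hQ
  set E : (∀ k, ι k) → Matrix (∀ k, H k) (∀ k, H k) ℂ := fun iv => prodOp fun k => P k (iv k)
    with hEdef
  set F : (∀ k, ι k) → Matrix (∀ k, H k) (∀ k, H k) ℂ := fun iv => prodOp fun k => Q k (iv k)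
    with hFdef
  have hσF := hF.eq_sum_of_commute (X := σ) fun iv => commute_prodOp σ _ fun k => hcomm k _
  set s : (∀ k, ι k) → ℂ := fun iv => (F iv * σ).trace with hs
  have hGG : G * Gᴴ = 1 := Matrix.mem_unitaryGroup_iff.mp hGunit
  have hGG' : Gᴴ * G = 1 := Matrix.mem_unitaryGroup_iff'.mp hGunit
  suffices hperm : ∃ π : Equiv.Perm (∀ k, ι k), ∀ i : ∀ k, ι k,
      (s (π i), fun k : {k // k ∉ 𝒢} => π i k.1) = ((p i : ℂ), fun k : {k // k ∉ 𝒢} => i k.1) by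
    obtain ⟨π, hπ⟩ := hperm
    refine ⟨Q, π, hQ, hQout, fun iv k hk => ?_, ?_⟩
    · exact congrFun (Prod.ext_iff.mp (hπ iv)).2 ⟨k, hk⟩
    · rw [hσF]
      change ∑ j, s j • F j = ∑ iv, (p iv : ℂ) • F (π iv)
      rw [← Equiv.sum_comp π]
      refine Finset.sum_congr rfl fun iv _ => ?_
      have h : s (π iv) = p iv := (Prod.ext_iff.mp (hπ iv)).1
      rw [h]
  refine exists_perm_of_labels
    (fun i : ∀ k, ι k => ((p i : ℂ), fun k : {k // k ∉ 𝒢} => i k.1))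
    (fun j : ∀ k, ι k => (s j, fun k : {k // k ∉ 𝒢} => j k.1))
    (fun i j => (G * E i * Gᴴ * F j).trace) ?_ ?_ ?_
  · intro i j hij
    by_cases hres : ∀ k ∉ 𝒢, i k = j k
    · have hps : (p i : ℂ) ≠ s j := by
        intro h
        exact hij (Prod.ext h (funext fun k => hres k.1 k.2))
      -- evaluate `tr (E' i * σ * F j)` by letting `σ` act to the left and to the right
      have h1 : G * E i * Gᴴ * σ = (p i : ℂ) • (G * E i * Gᴴ) := by
        have h := hE.mul_sum (fun iv => (p iv : ℂ)) i
        change E i * (∑ iv, (p iv : ℂ) • prodOp fun k => P k (iv k)) = _ at h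
        rw [← hρdef] at h
        calc G * E i * Gᴴ * σ = G * E i * (Gᴴ * G) * ρ * Gᴴ := by
              rw [hσdef]; simp only [mul_assoc]
          _ = G * (E i * ρ) * Gᴴ := by rw [hGG', mul_one, mul_assoc G]
          _ = _ := by rw [h, mul_smul_comm, smul_mul_assoc]
      have h2 : σ * F j = s j • F j := by
        conv_lhs => rw [hσF]
        exact hF.sum_mul s j
      have h3 : (p i : ℂ) • (G * E i * Gᴴ * F j) = s j • (G * E i * Gᴴ * F j) := by
        rw [← smul_mul_assoc, ← h1, mul_assoc _ σ, h2, mul_smul_comm]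
      have h4 : ((p i : ℂ) - s j) • (G * E i * Gᴴ * F j) = 0 := by
        rw [sub_smul, h3, sub_self]
      have h5 := (smul_eq_zero.mp h4).resolve_left (sub_ne_zero.mpr hps)
      change (G * E i * Gᴴ * F j).trace = 0
      rw [h5, Matrix.trace_zero]
    · push Not at hres
      obtain ⟨k, hk, hne⟩ := hres
      have h1 : E i = E i * siteOp k (P k (i k)) := by
        rw [hEdef, prodOp_mul_siteOp, (hP k).2.1, Function.update_eq_self k (fun k => P k (i k))]
      have h2 : F j = siteOp k (P k (j k)) * F j := by
        have : P k (j k) * Q k (j k) = Q k (j k) := by rw [hQout k hk, (hP k).2.1]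
        rw [hFdef, siteOp_mul_prodOp, this, Function.update_eq_self k (fun k => Q k (j k))]
      change (G * E i * Gᴴ * F j).trace = 0
      have h3 : G * E i * Gᴴ * F j = 0 := by
        calc G * E i * Gᴴ * F j
            = G * (E i * siteOp k (P k (i k))) * Gᴴ * (siteOp k (P k (j k)) * F j) := by
              rw [← h1, ← h2]
          _ = G * E i * (siteOp k (P k (i k)) * Gᴴ) * siteOp k (P k (j k)) * F j := by
              simp only [mul_assoc]
          _ = G * E i * Gᴴ * (siteOp k (P k (i k)) * siteOp k (P k (j k))) * F j := by
              rw [← (hGS' k hk (i k)).eq]; simp only [mul_assoc]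
          _ = 0 := by
              rw [siteOp_mul_siteOp k _ _ ((hP k).2.2.2.1 _ _ hne), mul_zero, zero_mul]
      rw [h3, Matrix.trace_zero]
  · intro i
    rw [← Matrix.trace_sum, ← Finset.mul_sum, hF.2.2.2.2, mul_one, Matrix.trace_mul_comm,
      ← mul_assoc, hGG', one_mul]
    exact hE.2.2.1 i
  · intro j
    rw [← Matrix.trace_sum, ← Finset.sum_mul, ← Finset.sum_mul, ← Finset.mul_sum, hE.2.2.2.2,
      mul_one, hGG, one_mul]
    exact hF.2.2.1 j
end
end
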